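/- Let n ≥ 3 and let s : E(K_n) → ℝ be a shift vector such that ⋂_{e ∈ E(K_n)} [s_e, s_e + 1] = ∅. Then the shifted-interval MST distribution M_s on spanning trees of K_n is not uniform: there exist spanning trees T, T' of K_n with P_{M_s}(T) ≠ P_{M_s}(T'). -/

import Mathlib

open MeasureTheory SimpleGraph
open scoped Classical

noncomputable section

namespace RST

variable {V : Type*}

/-- The graph on `V` whose edge set is the finset `T`. -/
def spanGraph (T : Finset (Sym2 V)) : SimpleGraph V :=
  SimpleGraph.fromEdgeSet ↑T

/-- `T` is (the edge set of) a spanning tree of `G`. -/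
def IsSpanningTree (G : SimpleGraph V) (T : Finset (Sym2 V)) : Prop :=
  ↑T ⊆ G.edgeSet ∧ (spanGraph T).Connected ∧ (spanGraph T).IsAcyclic

/-- Total weight `∑_{e ∈ T} w e` of the tree `T`. -/
def treeWeight (G : SimpleGraph V) [Fintype V] (w : G.edgeSet → ℝ) (T : Finset (Sym2 V)) : ℝ :=
  ∑ e : G.edgeSet, if (e : Sym2 V) ∈ T then w e else 0

/-- The event that `T` is the unique minimum-weight spanning tree of `G`. -/
def mstEvent (G : SimpleGraph V) [Fintype V] (T : Finset (Sym2 V)) : Set (G.edgeSet → ℝ) :=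
  {w | IsSpanningTree G T ∧ ∀ T' : Finset (Sym2 V), IsSpanningTree G T' → T' ≠ T →
    treeWeight G w T < treeWeight G w T'}

/-- Shifted-interval product measure: each edge `e` independently gets a weight drawn
uniformly from `[s e, s e + 1]`. -/
def shiftMeasure (G : SimpleGraph V) [Fintype V] (s : G.edgeSet → ℝ) :
    Measure (G.edgeSet → ℝ) :=
  Measure.pi fun e => (volume : Measure ℝ).restrict (Set.Icc (s e) (s e + 1))

/-- `P_{M_s}(T)`: the probability under the shifted-interval MST distribution `M_s`
that `T` is the (unique) minimum-weight spanning tree. -/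
def shiftedMstProb (G : SimpleGraph V) [Fintype V] (s : G.edgeSet → ℝ)
    (T : Finset (Sym2 V)) : ℝ :=
  (shiftMeasure G s (mstEvent G T)).toReal

/-!
**Idea.** If the open intervals have no common point, some edges `e` and `f` satisfy
`s e + 1 ≤ s f`, so almost surely `w e ≤ w f`. A cycle through `e` and `f`, with `e` removed,
extends to a spanning tree `T`. Exchanging `f` for `e` in `T` gives another spanning tree, which is
almost surely no heavier, so `T` has probability zero. But some spanning tree has positive
probability, because the weights with a unique minimum-weight spanning tree form a dense open set.
-/

section SpanningTrees

variable {G F : SimpleGraph V} {T T' : Finset (Sym2 V)} {e f : Sym2 V} {u v : V}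

lemma isSpanningTree_iff : IsSpanningTree G T ↔ ↑T ⊆ G.edgeSet ∧ (spanGraph T).IsTree := by
  rw [IsSpanningTree, isTree_iff]

lemma edgeSet_spanGraph (hT : ↑T ⊆ G.edgeSet) : (spanGraph T).edgeSet = T := by
  rw [spanGraph, edgeSet_fromEdgeSet, sdiff_eq_left]
  exact Set.disjoint_left.2 fun e he ↦ G.not_isDiag_of_mem_edgeSet (hT he)

lemma isSpanningTree_edgeFinset [Fintype F.edgeSet] (hF : F.IsTree) (hFG : F ≤ G) :
    IsSpanningTree G F.edgeFinset := by
  rw [isSpanningTree_iff, spanGraph, coe_edgeFinset, fromEdgeSet_edgeSet]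
  exact ⟨edgeSet_mono hFG, hF⟩

lemma IsSpanningTree.of_connected_of_card_eq [Finite V] (hT : IsSpanningTree G T)
    (hT'G : ↑T' ⊆ G.edgeSet) (hT' : (spanGraph T').Connected) (hcard : T'.card = T.card) :
    IsSpanningTree G T' := by
  have hTcard := (isTree_iff_connected_and_card.1 (isSpanningTree_iff.1 hT).2).2
  refine isSpanningTree_iff.2 ⟨hT'G, isTree_iff_connected_and_card.2 ⟨hT', ?_⟩⟩
  rw [edgeSet_spanGraph hT.1, Nat.card_coe_set_eq, Set.ncard_coe_finset] at hTcard
  rwa [edgeSet_spanGraph hT'G, Nat.card_coe_set_eq, Set.ncard_coe_finset, hcard]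

end SpanningTrees

section Exchange

variable {G : SimpleGraph V} {T : Finset (Sym2 V)} {e f : Sym2 V} {u v : V} {c : G.Walk v v}

lemma IsSpanningTree.exists_notMem_of_isCycle (hT : IsSpanningTree G T) (hc : c.IsCycle) :
    ∃ e ∈ c.edges, e ∉ T := by
  by_contra! hcT
  have hcT' : ∀ e ∈ c.edges, e ∈ (spanGraph T).edgeSet := by
    rwa [edgeSet_spanGraph hT.1]
  exact hT.2.2 _ (hc.transfer hcT')

lemma IsSpanningTree.mem_edges_and_notMem_of_isCycle (hT : IsSpanningTree G T) (hc : c.IsCycle)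
    (hcT : ∀ g ∈ c.edges, g ∈ insert e T) : e ∈ c.edges ∧ e ∉ T := by
  obtain ⟨g, hgc, hgT⟩ := hT.exists_notMem_of_isCycle hc
  obtain rfl : g = e := (Finset.mem_insert.1 (hcT g hgc)).resolve_right hgT
  exact ⟨hgc, hgT⟩

lemma connected_spanGraph_erase_of_isCycle (hTG : ↑T ⊆ G.edgeSet) (hT : (spanGraph T).Connected)
    (hc : c.IsCycle) (hcT : ∀ g ∈ c.edges, g ∈ T) (hfc : f ∈ c.edges) :
    (spanGraph (T.erase f)).Connected := by
  have hbridge : ¬ (spanGraph T).IsBridge f := fun hf ↦ by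
    have hcT' : ∀ g ∈ c.edges, g ∈ (spanGraph T).edgeSet := by
      rwa [edgeSet_spanGraph hTG]
    exact hf.notMem_edges_of_isCycle (hc.transfer hcT') (by rwa [Walk.edges_transfer])
  have hdelete : spanGraph (T.erase f) = (spanGraph T).deleteEdges {f} := by
    rw [spanGraph, spanGraph, Finset.coe_erase, deleteEdges_fromEdgeSet]
  rw [hdelete]
  induction f with | _ x y => exact hT.connected_delete_edge_of_not_isBridge hbridge

lemma IsSpanningTree.exchange [Finite V] (hT : IsSpanningTree G T) (hc : c.IsCycle)
    (hcT : ∀ g ∈ c.edges, g ∈ insert e T) (hfc : f ∈ c.edges) (hfe : f ≠ e) :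
    IsSpanningTree G (insert e (T.erase f)) := by
  obtain ⟨hec, heT⟩ := hT.mem_edges_and_notMem_of_isCycle hc hcT
  have hinsertG : ↑(insert e T) ⊆ G.edgeSet := by
    rw [Finset.coe_insert]
    exact Set.insert_subset (c.edges_subset_edgeSet hec) hT.1
  have hinsert : (spanGraph (insert e T)).Connected :=
    hT.2.1.mono (fromEdgeSet_mono (Finset.coe_subset.2 (Finset.subset_insert e T)))
  rw [← Finset.erase_insert_of_ne hfe.symm]
  refine hT.of_connected_of_card_eq ?_
    (connected_spanGraph_erase_of_isCycle hinsertG hinsert hc hcT hfc) ?_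
  · exact (Finset.coe_subset.2 (Finset.erase_subset _ _)).trans hinsertG
  · rw [Finset.card_erase_of_mem (hcT f hfc), Finset.card_insert_of_notMem heT,
      Nat.add_sub_cancel]

lemma isAcyclic_spanningCoe_toSubgraph {p : G.Walk u v} (hp : p.IsPath) :
    p.toSubgraph.spanningCoe.IsAcyclic := by
  induction p with
  | nil => exact isAcyclic_bot
  | @cons u x v h p ih =>
    rw [Walk.cons_isPath_iff] at hp
    have hu : p.toSubgraph.spanningCoe.neighborSet u = ∅ :=
      Set.eq_empty_of_forall_notMem fun y hy ↦
        hp.2 (p.mem_verts_toSubgraph.1 (p.toSubgraph.edge_vert hy))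
    rw [Walk.toSubgraph, Subgraph.sup_spanningCoe, Subgraph.spanningCoe_subgraphOfAdj, sup_comm]
    exact (ih hp.1).sup_edge_of_not_reachable (not_reachable_of_neighborSet_left_eq_empty h.ne hu)

lemma exists_isPath_of_isCycle (hc : c.IsCycle) (he : e ∈ c.edges) :
    ∃ (x y : V) (p : G.Walk x y), p.IsPath ∧ ∀ f ∈ c.edges, f = e ∨ f ∈ p.edges := by
  obtain ⟨d, hd, rfl⟩ := List.mem_map.1 he
  have hdc : d.fst ∈ c.support := c.dart_fst_mem_support_of_mem_darts hd
  have hc' := hc.rotate hdc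
  have hd' := (c.rotate_darts _ hdc).mem_iff.2 hd
  have hedges := fun f ↦ ((c.rotate_edges _ hdc).mem_iff (a := f)).2
  generalize c.rotate d.fst hdc = c' at hc' hd' hedges
  cases c' with
  | nil => simp at hc'
  | @cons _ y _ h p =>
    have hnodup := hc'.nodup_dropLast_support
    rw [← Walk.map_fst_darts, Walk.darts_cons, List.map_cons, List.nodup_cons] at hnodup
    have hdp : d ∉ p.darts := fun hdp ↦ hnodup.1 (List.mem_map_of_mem (f := (·.fst)) hdp)
    have hd_eq : d = ⟨(d.fst, y), h⟩ := (List.mem_cons.1 hd').resolve_right hdp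
    have hd_edge : d.edge = s(d.fst, y) := congrArg Dart.edge hd_eq
    exact ⟨y, _, p, ((Walk.cons_isCycle_iff p h).1 hc').1, fun f hf ↦
      hd_edge ▸ List.mem_cons.1 (hedges f hf)⟩

lemma exists_isSpanningTree_insert_of_isCycle [Finite V] (hG : G.Connected) (hc : c.IsCycle)
    (he : e ∈ c.edges) : ∃ T, IsSpanningTree G T ∧ ∀ f ∈ c.edges, f ∈ insert e T := by
  have := Fintype.ofFinite V
  obtain ⟨x, y, p, hp, hcp⟩ := exists_isPath_of_isCycle hc he
  obtain ⟨F, hpF, hFG, hF⟩ := hG.exists_isTree_le_of_le_of_isAcyclic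
    p.toSubgraph.spanningCoe_le (isAcyclic_spanningCoe_toSubgraph hp)
  refine ⟨F.edgeFinset, isSpanningTree_edgeFinset hF hFG, fun f hf ↦ ?_⟩
  rw [Finset.mem_insert, mem_edgeFinset]
  refine (hcp f hf).imp_right fun hfp ↦ edgeSet_mono hpF ?_
  rwa [Subgraph.edgeSet_spanningCoe, Walk.mem_edges_toSubgraph]

lemma exists_isSpanningTree_exchange [Finite V] (hG : G.Connected) (hc : c.IsCycle)
    (he : e ∈ c.edges) (hf : f ∈ c.edges) (hef : e ≠ f) :
    ∃ T, IsSpanningTree G T ∧ e ∉ T ∧ f ∈ T ∧ IsSpanningTree G (insert e (T.erase f)) := by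
  obtain ⟨T, hT, hcT⟩ := exists_isSpanningTree_insert_of_isCycle hG hc he
  exact ⟨T, hT, (hT.mem_edges_and_notMem_of_isCycle hc hcT).2,
    Finset.mem_of_mem_insert_of_ne (hcT f hf) hef.symm, hT.exchange hc hcT hf hef.symm⟩

end Exchange

lemma exists_isCycle_top_of_ne {e f : Sym2 V} (he : e ∈ (⊤ : SimpleGraph V).edgeSet)
    (hf : f ∈ (⊤ : SimpleGraph V).edgeSet) (hef : e ≠ f) :
    ∃ (v : V) (c : (⊤ : SimpleGraph V).Walk v v), c.IsCycle ∧ e ∈ c.edges ∧ f ∈ c.edges := by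
  by_cases hshare : ∃ v, v ∈ e ∧ v ∈ f
  · obtain ⟨v, hve, hvf⟩ := hshare
    obtain ⟨a, rfl⟩ := Sym2.mem_iff_exists.1 hve
    obtain ⟨b, rfl⟩ := Sym2.mem_iff_exists.1 hvf
    have hab : a ≠ b := fun h ↦ hef (h ▸ rfl)
    have hva : v ≠ a := he
    have hvb : v ≠ b := hf
    let triangle : (⊤ : SimpleGraph V).Walk v v :=
      .cons (v := a) hva (.cons (v := b) hab (.cons hvb.symm .nil))
    refine ⟨v, triangle, ?_, by simp [triangle], by simp [triangle]⟩
    simp [triangle, Walk.cons_isCycle_iff, Walk.cons_isPath_iff, *, Ne.symm]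
  · induction e with | _ a b
    induction f with | _ x y
    have hab : a ≠ b := he
    have hxy : x ≠ y := hf
    obtain ⟨hxa, hxb⟩ : x ≠ a ∧ x ≠ b := by simpa using fun h ↦ hshare ⟨x, h, by simp⟩
    obtain ⟨hya, hyb⟩ : y ≠ a ∧ y ≠ b := by simpa using fun h ↦ hshare ⟨y, h, by simp⟩
    let square : (⊤ : SimpleGraph V).Walk a a :=
      .cons (v := b) hab (.cons (v := x) hxb.symm (.cons (v := y) hxy (.cons hya .nil)))
    refine ⟨a, square, ?_, by simp [square], by simp [square]⟩
    simp [square, Walk.cons_isCycle_iff, Walk.cons_isPath_iff, *, Ne.symm]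

section Weights

variable [Fintype V] {G : SimpleGraph V} {T T' : Finset (Sym2 V)} {w : G.edgeSet → ℝ}
  {e f : G.edgeSet}

lemma treeWeight_add (w d : G.edgeSet → ℝ) (T : Finset (Sym2 V)) :
    treeWeight G (w + d) T = treeWeight G w T + treeWeight G d T := by
  simp only [treeWeight, ← Finset.sum_add_distrib]
  exact Finset.sum_congr rfl fun x _ ↦ by split_ifs <;> simp

lemma treeWeight_insert (he : ↑e ∉ T) :
    treeWeight G w (insert ↑e T) = w e + treeWeight G w T := by
  have hsplit (x : G.edgeSet) : (if ↑x ∈ insert ↑e T then w x else 0) =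
      (if x = e then w x else 0) + if ↑x ∈ T then w x else 0 := by
    by_cases hx : x = e
    · simp [hx, he]
    · simp [hx, Subtype.coe_inj]
  simp only [treeWeight, hsplit, Finset.sum_add_distrib, Finset.sum_ite_eq', Finset.mem_univ,
    if_true]

lemma treeWeight_exchange (he : ↑e ∉ T) (hf : ↑f ∈ T) :
    treeWeight G w (insert ↑e (T.erase ↑f)) + w f = treeWeight G w T + w e := by
  have hinsert : treeWeight G w (insert ↑e (T.erase ↑f)) = w e + treeWeight G w (T.erase ↑f) :=
    treeWeight_insert (Finset.notMem_mono (Finset.erase_subset _ _) he)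
  have herase : treeWeight G w T = w f + treeWeight G w (T.erase ↑f) := by
    rw [← treeWeight_insert (Finset.notMem_erase _ _), Finset.insert_erase hf]
  rw [hinsert, herase]
  ring

lemma treeWeight_lt_treeWeight (hT : ↑T ⊆ G.edgeSet) (hT' : ↑T' ⊆ G.edgeSet) (hne : T' ≠ T)
    (hneg : ∀ e : G.edgeSet, ↑e ∈ T → w e < 0) (hpos : ∀ e : G.edgeSet, ↑e ∉ T → 0 < w e) :
    treeWeight G w T < treeWeight G w T' := by
  obtain ⟨e, he⟩ : ∃ e, ¬ (e ∈ T' ↔ e ∈ T) := by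
    by_contra! h
    exact hne (Finset.ext h)
  have heG : e ∈ G.edgeSet := by
    by_cases heT : e ∈ T
    · exact hT heT
    · exact hT' (by simpa [heT] using he)
  refine Finset.sum_lt_sum (fun x _ ↦ ?_) ⟨⟨e, heG⟩, Finset.mem_univ _, ?_⟩
  · have := hneg x
    have := hpos x
    grind
  · have := hneg ⟨e, heG⟩
    have := hpos ⟨e, heG⟩
    grind

lemma continuous_treeWeight (T : Finset (Sym2 V)) : Continuous fun w ↦ treeWeight G w T :=
  continuous_finsetSum _ fun e _ ↦ by split_ifs <;> fun_prop

end Weights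

section MinimumWeight

variable [Fintype V] {G : SimpleGraph V} {T : Finset (Sym2 V)}

lemma isOpen_mstEvent (T : Finset (Sym2 V)) : IsOpen (mstEvent G T) := by
  simp only [mstEvent, Set.ofPred_and, Set.ofPred_forall]
  exact isOpen_const.inter <| isOpen_iInter_of_finite fun T' ↦ isOpen_iInter_of_finite fun _ ↦
    isOpen_iInter_of_finite fun _ ↦ isOpen_lt (continuous_treeWeight T) (continuous_treeWeight T')

lemma apply_lt_apply_of_mem_mstEvent {w : G.edgeSet → ℝ} {e f : G.edgeSet}
    (hw : w ∈ mstEvent G T) (hT : IsSpanningTree G (insert ↑e (T.erase ↑f))) (he : ↑e ∉ T)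
    (hf : ↑f ∈ T) : w f < w e := by
  have hne : insert ↑e (T.erase ↑f) ≠ T := fun h ↦ he (h ▸ Finset.mem_insert_self _ _)
  linarith [hw.2 _ hT hne, treeWeight_exchange (w := w) he hf]

/- Lowering the weights on a minimum-weight spanning tree and raising all others, by however little,
makes it the unique one. -/
lemma dense_iUnion_mstEvent (hG : G.Connected) : Dense (⋃ T, mstEvent G T) := by
  refine Metric.dense_iff.2 fun w r hr ↦ ?_
  obtain ⟨T, hT, hmin⟩ : ∃ T, IsSpanningTree G T ∧
      ∀ T', IsSpanningTree G T' → treeWeight G w T ≤ treeWeight G w T' := by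
    obtain ⟨F, hFG, hF⟩ := hG.exists_isTree_le
    exact Set.exists_min_image {T | IsSpanningTree G T} (treeWeight G w) (Set.toFinite _)
      ⟨F.edgeFinset, isSpanningTree_edgeFinset hF hFG⟩
  let d : G.edgeSet → ℝ := fun e ↦ if ↑e ∈ T then -(r / 2) else r / 2
  refine ⟨w + d, ?_, Set.mem_iUnion.2 ⟨T, hT, fun T' hT' hne ↦ ?_⟩⟩
  · rw [Metric.mem_ball, dist_self_add_left, pi_norm_lt_iff hr]
    intro e
    by_cases he : ↑e ∈ T <;> simpa [d, he, abs_of_pos hr] using hr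
  · have hd : treeWeight G d T < treeWeight G d T' :=
      treeWeight_lt_treeWeight hT.1 hT'.1 hne (fun e he ↦ by simp [d, he, hr])
        (fun e he ↦ by simp [d, he, hr])
    rw [treeWeight_add, treeWeight_add]
    exact add_lt_add_of_le_of_lt (hmin T' hT') hd

end MinimumWeight

section Probability

variable [Fintype V] {G : SimpleGraph V} {T : Finset (Sym2 V)} {s : G.edgeSet → ℝ}

lemma shiftMeasure_eq_restrict (s : G.edgeSet → ℝ) :
    shiftMeasure G s = volume.restrict (Set.univ.pi fun e ↦ Set.Icc (s e) (s e + 1)) := by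
  rw [shiftMeasure, volume_pi, Measure.restrict_pi_pi]

lemma shiftMeasure_apply (s : G.edgeSet → ℝ) (A : Set (G.edgeSet → ℝ)) :
    shiftMeasure G s A = volume (A ∩ Set.univ.pi fun e ↦ Set.Icc (s e) (s e + 1)) := by
  rw [shiftMeasure_eq_restrict, Measure.restrict_apply' (.univ_pi fun _ ↦ measurableSet_Icc)]

lemma shiftedMstProb_eq_zero {e f : G.edgeSet} (hs : s e + 1 ≤ s f)
    (hT : IsSpanningTree G (insert ↑e (T.erase ↑f))) (he : ↑e ∉ T) (hf : ↑f ∈ T) :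
    shiftedMstProb G s T = 0 := by
  have hempty : mstEvent G T ∩ Set.univ.pi (fun e ↦ Set.Icc (s e) (s e + 1)) = ∅ := by
    refine Set.eq_empty_of_forall_notMem fun w ⟨hw, hws⟩ ↦ ?_
    have hwe : w e ≤ s e + 1 := (hws e trivial).2
    have hwf : s f ≤ w f := (hws f trivial).1
    linarith [apply_lt_apply_of_mem_mstEvent hw hT he hf]
  rw [shiftedMstProb, shiftMeasure_apply, hempty, measure_empty, ENNReal.toReal_zero]

lemma shiftedMstProb_pos {w : G.edgeSet → ℝ} (hw : w ∈ mstEvent G T)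
    (hws : w ∈ Set.univ.pi fun e ↦ Set.Ioo (s e) (s e + 1)) : 0 < shiftedMstProb G s T := by
  have : IsFiniteMeasure (shiftMeasure G s) := by
    unfold shiftMeasure
    infer_instance
  have hopen : IsOpen (mstEvent G T ∩ Set.univ.pi fun e ↦ Set.Ioo (s e) (s e + 1)) :=
    (isOpen_mstEvent T).inter (isOpen_set_pi Set.finite_univ fun _ _ ↦ isOpen_Ioo)
  have hpos : 0 < shiftMeasure G s (mstEvent G T) := by
    rw [shiftMeasure_apply]
    refine (hopen.measure_pos volume ⟨w, hw, hws⟩).trans_le (measure_mono ?_)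
    exact Set.inter_subset_inter_right _ (Set.pi_mono fun _ _ ↦ Set.Ioo_subset_Icc_self)
  exact ENNReal.toReal_pos hpos.ne' (measure_ne_top _ _)

lemma exists_shiftedMstProb_pos (hG : G.Connected) (s : G.edgeSet → ℝ) :
    ∃ T, IsSpanningTree G T ∧ 0 < shiftedMstProb G s T := by
  have hopen : IsOpen (Set.univ.pi fun e ↦ Set.Ioo (s e) (s e + 1)) :=
    isOpen_set_pi Set.finite_univ fun _ _ ↦ isOpen_Ioo
  have hnonempty : (Set.univ.pi fun e ↦ Set.Ioo (s e) (s e + 1)).Nonempty :=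
    Set.univ_pi_nonempty_iff.2 fun e ↦ Set.nonempty_Ioo.2 (lt_add_one (s e))
  obtain ⟨w, hws, hw⟩ := (dense_iUnion_mstEvent hG).inter_open_nonempty _ hopen hnonempty
  obtain ⟨T, hT⟩ := Set.mem_iUnion.1 hw
  exact ⟨T, hT.1, shiftedMstProb_pos hT hws⟩

end Probability

lemma exists_le_of_iInter_Ioo_eq_empty {ι α : Type*} [Finite ι] [LinearOrder α] [DenselyOrdered α]
    [NoMinOrder α] [NoMaxOrder α] [Nonempty α] {a b : ι → α}
    (h : ⋂ i, Set.Ioo (a i) (b i) = ∅) : ∃ i j, b i ≤ a j := by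
  have := Fintype.ofFinite ι
  by_contra! hab
  obtain ⟨x, hax, hxb⟩ := Order.exists_between_finsets (Finset.univ.image a) (Finset.univ.image b)
    (by simpa using fun i j ↦ hab j i)
  have hx : x ∈ ⋂ i, Set.Ioo (a i) (b i) :=
    Set.mem_iInter.2 fun i ↦ ⟨hax _ (by simp), hxb _ (by simp)⟩
  exact h.subset hx

/- By Whitney's theorem `hcycle` amounts to 2-connectedness, as soon as `G` has two edges. -/
theorem shifted_nonoverlap_not_uniform_general [Fintype V] (G : SimpleGraph V) (hG : G.Connected)
    (hcycle : ∀ e ∈ G.edgeSet, ∀ f ∈ G.edgeSet, e ≠ f →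
      ∃ (v : V) (c : G.Walk v v), c.IsCycle ∧ e ∈ c.edges ∧ f ∈ c.edges)
    (s : G.edgeSet → ℝ) (hcap : ⋂ e : G.edgeSet, Set.Ioo (s e) (s e + 1) = ∅) :
    ∃ T T' : Finset (Sym2 V), IsSpanningTree G T ∧ IsSpanningTree G T' ∧
      shiftedMstProb G s T ≠ shiftedMstProb G s T' := by
  obtain ⟨e, f, hs⟩ := exists_le_of_iInter_Ioo_eq_empty hcap
  have hef : (e : Sym2 V) ≠ f := by
    intro h
    rw [Subtype.ext h] at hs
    exact (lt_add_one (s f)).not_ge hs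
  obtain ⟨v, c, hc, hec, hfc⟩ := hcycle e e.2 f f.2 hef
  obtain ⟨T, hT, heT, hfT, hexch⟩ := exists_isSpanningTree_exchange hG hc hec hfc hef
  obtain ⟨T', hT', hpos⟩ := exists_shiftedMstProb_pos hG s
  exact ⟨T, T', hT, hT', (shiftedMstProb_eq_zero hs hexch heT hfT).trans_ne hpos.ne⟩

/-- If `n ≥ 3` and the intervals `[s_e, s_e + 1]` over the edges of `K_n` have empty
intersection, then the shifted-interval MST distribution `M_s` on spanning trees of
`K_n` is not uniform. -/
theorem shifted_nonoverlap_not_uniform (n : ℕ) (hn : 3 ≤ n)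
    (s : (⊤ : SimpleGraph (Fin n)).edgeSet → ℝ)
    (hcap : (⋂ e : (⊤ : SimpleGraph (Fin n)).edgeSet, Set.Icc (s e) (s e + 1)) = ∅) :
    ∃ T T' : Finset (Sym2 (Fin n)),
      IsSpanningTree (⊤ : SimpleGraph (Fin n)) T ∧
      IsSpanningTree (⊤ : SimpleGraph (Fin n)) T' ∧
      shiftedMstProb (⊤ : SimpleGraph (Fin n)) s T ≠
        shiftedMstProb (⊤ : SimpleGraph (Fin n)) s T' := by
  have : NeZero n := ⟨by lia⟩
  exact shifted_nonoverlap_not_uniform_general ⊤ connected_top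
    (fun _ he _ hf ↦ exists_isCycle_top_of_ne he hf) s <|
    Set.subset_eq_empty (Set.iInter_mono fun _ ↦ Set.Ioo_subset_Icc_self) hcap

end RST
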